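/- Let f : ℝ × ℝ^d → ℝ^d, (θ,u) ↦ f_θ(u), be 1-periodic in θ, continuous in θ and continuously differentiable in u (jointly continuously), and set ⟨f⟩(u) = ∫₀¹ f_θ(u) dθ and g_θ(u) = ∫₀^θ ( f_τ(u) − ⟨f⟩(u) ) dτ. Then for every θ ∈ ℝ and every u ∈ ℝ^d: −∂_u g_θ(u)·g_θ(u) = ∫₀^θ ( ∂_u g_τ(u)·⟨f⟩(u) + ∂_u⟨f⟩(u)·g_τ(u) − ∂_u g_τ(u)·f_τ(u) − ∂_u f_τ(u)·g_τ(u) ) dτ. -/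

import Mathlib

/-- θ-average `⟨f⟩(u) = ∫₀¹ f_θ(u) dθ`. -/
noncomputable def thAvg (d : ℕ) (f : ℝ → (Fin d → ℝ) → (Fin d → ℝ))
    (u : Fin d → ℝ) : Fin d → ℝ :=
  ∫ τ in (0:ℝ)..1, f τ u

/-- `g_θ(u) = ∫₀^θ ( f_τ(u) − ⟨f⟩(u) ) dτ`. -/
noncomputable def gmap (d : ℕ) (f : ℝ → (Fin d → ℝ) → (Fin d → ℝ))
    (θ : ℝ) (u : Fin d → ℝ) : Fin d → ℝ :=
  ∫ τ in (0:ℝ)..θ, (f τ u - thAvg d f u)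

/-- Differentiation under the integral sign on a compact interval. -/
theorem hasFDerivAt_param {d : ℕ} (F : ℝ → (Fin d → ℝ) → (Fin d → ℝ))
    (F' : ℝ → (Fin d → ℝ) → ((Fin d → ℝ) →L[ℝ] (Fin d → ℝ)))
    (hF : Continuous fun p : ℝ × (Fin d → ℝ) => F p.1 p.2)
    (hF' : Continuous fun p : ℝ × (Fin d → ℝ) => F' p.1 p.2)
    (h : ∀ t x, HasFDerivAt (F t) (F' t x) x) (a b : ℝ) (u : Fin d → ℝ) :
    HasFDerivAt (fun x => ∫ t in a..b, F t x) (∫ t in a..b, F' t u) u := by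
  have hc1 : ∀ x, Continuous fun t => F t x := fun x =>
    hF.comp (continuous_id.prodMk continuous_const)
  have hc2 : ∀ x, Continuous fun t => F' t x := fun x =>
    hF'.comp (continuous_id.prodMk continuous_const)
  obtain ⟨C, hC⟩ := ((isCompact_uIcc (a := a) (b := b)).prod
    (isCompact_closedBall u 1)).exists_bound_of_continuousOn hF'.continuousOn
  refine intervalIntegral.hasFDerivAt_integral_of_dominated_of_fderiv_le
    (F := fun x t => F t x) (F' := fun x t => F' t x) (bound := fun _ => C)
    (Metric.ball_mem_nhds u one_pos) ?_ ?_ ?_ ?_ ?_ ?_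
  · exact Filter.Eventually.of_forall fun x => (hc1 x).aestronglyMeasurable
  · exact (hc1 u).intervalIntegrable _ _
  · exact (hc2 u).aestronglyMeasurable
  · exact Filter.Eventually.of_forall fun t ht x hx =>
      hC (t, x) ⟨Set.uIoc_subset_uIcc ht, Metric.ball_subset_closedBall hx⟩
  · exact intervalIntegrable_const
  · exact Filter.Eventually.of_forall fun t _ x _ => h t x

/-- The key expansion used to rewrite the second-order correction in Lie-bracket form:
`−∂_u g_θ(u)·g_θ(u) = ∫₀^θ ( ∂_u g_τ·⟨f⟩ + ∂_u⟨f⟩·g_τ − ∂_u g_τ·f_τ − ∂_u f_τ·g_τ ) dτ`. -/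
theorem statement18 (d : ℕ)
    (f : ℝ → (Fin d → ℝ) → (Fin d → ℝ))
    (hfper : ∀ u, Function.Periodic (fun θ => f θ u) 1)
    (hfcont : Continuous fun p : ℝ × (Fin d → ℝ) => f p.1 p.2)
    (hfdiff : ∀ θ, ContDiff ℝ 1 (f θ))
    (hfdcont : Continuous fun p : ℝ × (Fin d → ℝ) => fderiv ℝ (f p.1) p.2)
    (θ : ℝ) (u : Fin d → ℝ) :
    -(fderiv ℝ (gmap d f θ) u (gmap d f θ u)) =
      ∫ τ in (0:ℝ)..θ,
        (fderiv ℝ (gmap d f τ) u (thAvg d f u)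
          + fderiv ℝ (thAvg d f) u (gmap d f τ u)
          - fderiv ℝ (gmap d f τ) u (f τ u)
          - fderiv ℝ (f τ) u (gmap d f τ u)) := by
  have hA : ∀ x, HasFDerivAt (thAvg d f) (∫ t in (0:ℝ)..1, fderiv ℝ (f t) x) x := fun x =>
    hasFDerivAt_param f (fun t x => fderiv ℝ (f t) x) hfcont hfdcont
      (fun t x => ((hfdiff t).differentiable one_ne_zero x).hasFDerivAt) 0 1 x
  have hAc : Continuous (thAvg d f) :=
    continuous_iff_continuousAt.2 fun x => (hA x).continuousAt
  have hA'c : Continuous fun x => ∫ t in (0:ℝ)..1, fderiv ℝ (f t) x :=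
    intervalIntegral.continuous_parametric_intervalIntegral_of_continuous'
      (f := fun x t => fderiv ℝ (f t) x) (hfdcont.comp continuous_swap) 0 1
  have hG : ∀ s, HasFDerivAt (gmap d f s)
      (∫ t in (0:ℝ)..s, (fderiv ℝ (f t) u - ∫ t in (0:ℝ)..1, fderiv ℝ (f t) u)) u := fun s =>
    hasFDerivAt_param (fun t x => f t x - thAvg d f x)
      (fun t x => fderiv ℝ (f t) x - ∫ t in (0:ℝ)..1, fderiv ℝ (f t) x)
      (hfcont.sub (hAc.comp continuous_snd)) (hfdcont.sub (hA'c.comp continuous_snd))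
      (fun t x => ((hfdiff t).differentiable one_ne_zero x).hasFDerivAt.sub (hA x)) 0 s u
  have hcf : Continuous fun t => f t u := hfcont.comp (continuous_id.prodMk continuous_const)
  have hcf' : Continuous fun t => fderiv ℝ (f t) u :=
    hfdcont.comp (continuous_id.prodMk continuous_const)
  have hgd : ∀ s, HasDerivAt (fun s => gmap d f s u) (f s u - thAvg d f u) s := fun s =>
    (hcf.sub continuous_const).integral_hasStrictDerivAt 0 s |>.hasDerivAt
  have hGd : ∀ s, HasDerivAt (fun s => fderiv ℝ (gmap d f s) u)
      (fderiv ℝ (f s) u - fderiv ℝ (thAvg d f) u) s := fun s => by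
    simp only [(hG _).fderiv, (hA u).fderiv]
    exact (hcf'.sub continuous_const).integral_hasStrictDerivAt 0 s |>.hasDerivAt
  have hgc : Continuous fun s => gmap d f s u :=
    continuous_iff_continuousAt.2 fun s => (hgd s).continuousAt
  have hGc : Continuous fun s => fderiv ℝ (gmap d f s) u :=
    continuous_iff_continuousAt.2 fun s => (hGd s).continuousAt
  have key : ∀ s ∈ Set.uIcc 0 θ, HasDerivAt (fun s => -(fderiv ℝ (gmap d f s) u (gmap d f s u)))
      (fderiv ℝ (gmap d f s) u (thAvg d f u)
          + fderiv ℝ (thAvg d f) u (gmap d f s u)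
          - fderiv ℝ (gmap d f s) u (f s u)
          - fderiv ℝ (f s) u (gmap d f s u)) s := fun s _ => by
    refine ((hGd s).clm_apply (hgd s)).neg.congr_deriv ?_
    simp only [map_sub, sub_apply]
    abel
  rw [intervalIntegral.integral_eq_sub_of_hasDerivAt key]
  · simp [gmap]
  · apply Continuous.intervalIntegrable
    fun_prop
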